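/- arXiv:0904.1961 — 8 statements merged into one kernel-verified Lean document; each statement's English description precedes it below -/
import Mathlib

section
/- Let g be a Lie algebra (over a field of characteristic zero, or any commutative ring) and let d : g → g be a linear map that is a derivation of the bracket (d[x,y] = [dx,y] + [x,dy]) and satisfies d ∘ d = 0. Then the derived bracket ⟦x,y⟧ := [dx, y] satisfies the left Leibniz identity: ⟦x,⟦y,z⟧⟧ = ⟦⟦x,y⟧,z⟧ + ⟦y,⟦x,z⟧⟧ for all x, y, z ∈ g. -/
/-- The derived bracket `⟦x,y⟧ := ⁅d x, y⁆` of a square-zero derivation `d` on a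
Lie algebra satisfies the left Leibniz identity. -/
theorem derived_bracket_left_leibniz
    {R : Type*} [CommRing R] {L : Type*} [LieRing L] [LieAlgebra R L]
    (d : L →ₗ[R] L)
    (hder : ∀ x y : L, d ⁅x, y⁆ = ⁅d x, y⁆ + ⁅x, d y⁆)
    (hsq : ∀ x : L, d (d x) = 0)
    (x y z : L) :
    ⁅d x, ⁅d y, z⁆⁆ = ⁅d ⁅d x, y⁆, z⁆ + ⁅d y, ⁅d x, z⁆⁆ := by
  rw [hder, hsq, zero_lie, zero_add]
  exact leibniz_lie _ _ _
end

section
/- Let g be a Lie algebra and let d : g → g be a linear map that is a derivation of the bracket and satisfies d ∘ d = 0. Then the second derived bracket ⟦x,y⟧ := [x, dy] satisfies the right Leibniz identity: ⟦⟦x,y⟧,z⟧ = ⟦⟦x,z⟧,y⟧ + ⟦x,⟦y,z⟧⟧ for all x, y, z ∈ g. -/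
/-- The second derived bracket `⟦x,y⟧ := ⁅x, d y⁆` of a square-zero derivation `d`
on a Lie algebra satisfies the right Leibniz identity. -/
theorem derived_bracket_right_leibniz
    {R : Type*} [CommRing R] {L : Type*} [LieRing L] [LieAlgebra R L]
    (d : L →ₗ[R] L)
    (hder : ∀ x y : L, d ⁅x, y⁆ = ⁅d x, y⁆ + ⁅x, d y⁆)
    (hsq : ∀ x : L, d (d x) = 0)
    (x y z : L) :
    ⁅⁅x, d y⁆, d z⁆ = ⁅⁅x, d z⁆, d y⁆ + ⁅x, d ⁅y, d z⁆⁆ := by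
  rw [hder, hsq, lie_zero, add_zero, leibniz_lie x (d y) (d z), ← lie_skew (d y) ⁅x, d z⁆]
  abel
end

section
/- Let A be an associative algebra and let d : A → A be a linear map satisfying d(xy) = (dx)y + x(dy) for all x, y and d ∘ d = 0. Define x ⊣ y := x(dy) and x ⊢ y := (dx)y. Then (A, ⊣, ⊢) is a diassociative algebra, i.e. for all x, y, z ∈ A: (x ⊣ y) ⊣ z = x ⊣ (y ⊣ z) = x ⊣ (y ⊢ z); (x ⊢ y) ⊣ z = x ⊢ (y ⊣ z); and (x ⊣ y) ⊢ z = (x ⊢ y) ⊢ z = x ⊢ (y ⊢ z). -/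
/-- A square-zero derivation `d` on an associative algebra yields a diassociative
algebra via the derived products `x ⊣ y := x * d y` and `x ⊢ y := d x * y`:
the five diassociativity axioms hold. -/
theorem derived_products_diassociative
    {R : Type*} [CommRing R] {A : Type*} [NonUnitalRing A] [Module R A]
    (d : A →ₗ[R] A)
    (hder : ∀ x y : A, d (x * y) = d x * y + x * d y)
    (hsq : ∀ x : A, d (d x) = 0)
    (x y z : A) :
    (x * d y) * d z = x * d (y * d z) ∧
    x * d (y * d z) = x * d (d y * z) ∧
    (d x * y) * d z = d x * (y * d z) ∧
    d (x * d y) * z = d (d x * y) * z ∧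
    d (d x * y) * z = d x * (d y * z) := by
  simp [hder, hsq, mul_assoc]
end

section
/- Let A be a commutative associative algebra and let d : A → A be a linear map satisfying d(xy) = (dx)y + x(dy) for all x, y and d ∘ d = 0. Then the derived product x ∗ y := (dx)y makes A a left permutation algebra: ∗ is associative and (x ∗ y) ∗ z = (y ∗ x) ∗ z for all x, y, z ∈ A. -/
/-- A square-zero derivation `d` on a commutative associative algebra yields a left
permutation algebra via the derived product `x ∗ y := d x * y`: the product is
associative and satisfies the left perm identity `(x∗y)∗z = (y∗x)∗z`. -/
theorem derived_product_perm
    {R : Type*} [CommRing R] {A : Type*} [NonUnitalCommRing A] [Module R A]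
    (d : A →ₗ[R] A)
    (hder : ∀ x y : A, d (x * y) = d x * y + x * d y)
    (hsq : ∀ x : A, d (d x) = 0)
    (x y z : A) :
    d (d x * y) * z = d x * (d y * z) ∧
    d (d x * y) * z = d (d y * x) * z := by
  have h : ∀ a b : A, d (d a * b) = d a * d b := fun a b => by
    rw [hder, hsq, zero_mul, zero_add]
  exact ⟨by rw [h, mul_assoc], by rw [h, h, mul_comm (d x)]⟩
end

section
/- Let A be an associative algebra and let α : A → A be a linear averaging operator, i.e. α(α(x)y) = α(x)α(y) = α(xα(y)) for all x, y ∈ A. Define x ⊣ y := xα(y) and x ⊢ y := α(x)y. Then (A, ⊣, ⊢) is a diassociative algebra, i.e. for all x, y, z ∈ A: (x ⊣ y) ⊣ z = x ⊣ (y ⊣ z) = x ⊣ (y ⊢ z); (x ⊢ y) ⊣ z = x ⊢ (y ⊣ z); and (x ⊣ y) ⊢ z = (x ⊢ y) ⊢ z = x ⊢ (y ⊢ z). -/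
/-- An averaging operator `α` on an associative algebra yields a diassociative
algebra via `x ⊣ y := x * α y` and `x ⊢ y := α x * y`: the five
diassociativity axioms hold. -/
theorem averaging_diassociative
    {R : Type*} [CommRing R] {A : Type*} [NonUnitalRing A] [Module R A]
    (α : A →ₗ[R] A)
    (hav₁ : ∀ x y : A, α (α x * y) = α x * α y)
    (hav₂ : ∀ x y : A, α x * α y = α (x * α y))
    (x y z : A) :
    (x * α y) * α z = x * α (y * α z) ∧
    x * α (y * α z) = x * α (α y * z) ∧
    (α x * y) * α z = α x * (y * α z) ∧
    α (x * α y) * z = α (α x * y) * z ∧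
    α (α x * y) * z = α x * (α y * z) := by
  refine ⟨?_, ?_, ?_, ?_, ?_⟩ <;> simp only [hav₁, ← hav₂, mul_assoc]
end

section
/- Let (P, ·, {·,·}) be a Poisson algebra and let d : P → P be a linear map with d ∘ d = 0 which is a derivation of both products: d(xy) = (dx)y + x(dy) and d{x,y} = {dx,y} + {x,dy}. Define the derived bracket ⟦x,y⟧ := {dx, y} and the derived product x ∗ y := (dx)y. Then for all x, y, z ∈ P the dual-prePoisson compatibility relations hold: (pp1) ⟦x, y ∗ z⟧ = ⟦x,y⟧ ∗ z + y ∗ ⟦x,z⟧; (pp2) ⟦x ∗ y, z⟧ = x ∗ ⟦y,z⟧ + y ∗ ⟦x,z⟧; (pp3) ⟦x,y⟧ ∗ z = −⟦y,x⟧ ∗ z. -/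
/-- Let `(P, *, br)` be a Poisson algebra (commutative associative product `*` and a
Lie bracket `br` satisfying the Leibniz rule) and `d` a square-zero derivation of
both products.  The derived bracket `⟦x,y⟧ := br (d x) y` and the derived product
`x ∗ y := d x * y` satisfy the dual-prePoisson compatibility relations
(pp1), (pp2), (pp3). -/
theorem poisson_derived_dual_prePoisson
    {R : Type*} [CommRing R] {P : Type*} [CommRing P] [Algebra R P]
    (br : P →ₗ[R] P →ₗ[R] P)
    (halt : ∀ x : P, br x x = 0)
    (hjac : ∀ x y z : P, br x (br y z) = br (br x y) z + br y (br x z))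
    (hleib : ∀ x y z : P, br x (y * z) = br x y * z + y * br x z)
    (d : P →ₗ[R] P)
    (hder_mul : ∀ x y : P, d (x * y) = d x * y + x * d y)
    (hder_br : ∀ x y : P, d (br x y) = br (d x) y + br x (d y))
    (hsq : ∀ x : P, d (d x) = 0)
    (x y z : P) :
    br (d x) (d y * z) = d (br (d x) y) * z + d y * br (d x) z ∧
    br (d (d x * y)) z = d x * br (d y) z + d y * br (d x) z ∧
    d (br (d x) y) * z = -(d (br (d y) x) * z) := by
  have hskew : ∀ a b : P, br a b = -br b a := by
    intro a b
    have h := halt (a + b)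
    simp only [map_add, LinearMap.add_apply, halt, zero_add, add_zero] at h
    linear_combination h
  have h1 : ∀ a b : P, d (br (d a) b) = br (d a) (d b) := by
    intro a b
    rw [hder_br, hsq]
    simp
  refine ⟨?_, ?_, ?_⟩
  · rw [h1, hleib]
  · rw [hder_mul, hsq, zero_mul, zero_add, hskew, hleib, hskew (d y) z, hskew (d x) z]
    ring
  · rw [h1, h1, hskew]
    ring
end

section
/- Let (P, ·, {·,·}) be a Poisson algebra and let α : P → P be a linear averaging operator for both products: α(α(x)y) = α(x)α(y) = α(xα(y)) and α{α(x),y} = {α(x),α(y)} = α{x,α(y)} for all x, y. Define ⟦x,y⟧ := {α(x), y} and x ∗ y := α(x)y. Then for all x, y, z ∈ P: (pp1) ⟦x, y ∗ z⟧ = ⟦x,y⟧ ∗ z + y ∗ ⟦x,z⟧; (pp2) ⟦x ∗ y, z⟧ = x ∗ ⟦y,z⟧ + y ∗ ⟦x,z⟧; (pp3) ⟦x,y⟧ ∗ z = −⟦y,x⟧ ∗ z. -/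
/-- Let `(P, *, br)` be a Poisson algebra (commutative associative product `*` and a
Lie bracket `br` satisfying the Leibniz rule) and `α` an averaging operator for both
products.  Aguiar's derived bracket `⟦x,y⟧ := br (α x) y` and the derived product
`x ∗ y := α x * y` satisfy the dual-prePoisson compatibility relations
(pp1), (pp2), (pp3). -/
theorem poisson_averaging_dual_prePoisson
    {R : Type*} [CommRing R] {P : Type*} [CommRing P] [Algebra R P]
    (br : P →ₗ[R] P →ₗ[R] P)
    (halt : ∀ x : P, br x x = 0)
    (hjac : ∀ x y z : P, br x (br y z) = br (br x y) z + br y (br x z))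
    (hleib : ∀ x y z : P, br x (y * z) = br x y * z + y * br x z)
    (α : P →ₗ[R] P)
    (hav_mul₁ : ∀ x y : P, α (α x * y) = α x * α y)
    (hav_mul₂ : ∀ x y : P, α x * α y = α (x * α y))
    (hav_br₁ : ∀ x y : P, α (br (α x) y) = br (α x) (α y))
    (hav_br₂ : ∀ x y : P, br (α x) (α y) = α (br x (α y)))
    (x y z : P) :
    br (α x) (α y * z) = α (br (α x) y) * z + α y * br (α x) z ∧
    br (α (α x * y)) z = α x * br (α y) z + α y * br (α x) z ∧
    α (br (α x) y) * z = -(α (br (α y) x) * z) := by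
  have hskew : ∀ a b : P, br a b = -br b a := by
    intro a b
    have h := halt (a + b)
    simp only [map_add, LinearMap.add_apply, halt, zero_add, add_zero] at h
    first
      | exact eq_neg_of_add_eq_zero_left h
      | exact eq_neg_of_add_eq_zero_right h
  refine ⟨?_, ?_, ?_⟩
  · rw [hleib, hav_br₁]
  · rw [hav_mul₁, hskew, hleib, hskew z (α x), hskew z (α y)]
    ring
  · rw [hav_br₁, hav_br₁, hskew (α x) (α y)]
    ring
end

section
/- Let (P, ·, {·,·}) be a Poisson algebra and let β : P → P be a linear map that is a Rota–Baxter operator of weight zero for both products: β(x)β(y) = β(β(x)y + xβ(y)) and {β(x),β(y)} = β({β(x),y} + {x,β(y)}) for all x, y. Define x ∘ y := {β(x), y} and x · y := β(x)y (the dual-derived products). Then, in addition to ∘ being left pre-Lie and (·) being Zinbiel, the prePoisson compatibility relations hold for all x, y, z ∈ P: (x ∘ y − y ∘ x) · z = x ∘ (y · z) − y · (x ∘ z), and (x · y + y · x) ∘ z = x · (y ∘ z) + y · (x ∘ z). -/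
/-- Let `(P, *, br)` be a Poisson algebra (commutative associative product `*` and a
Lie bracket `br` satisfying the Leibniz rule) and `β` a weight-zero Rota–Baxter
operator for both products.  The dual-derived products `x ∘ y := br (β x) y` and
`x ⊙ y := β x * y` make `P` a prePoisson algebra: `∘` is left pre-Lie, `⊙` is
Zinbiel, and the two prePoisson compatibility relations hold. -/
theorem rota_baxter_poisson_prePoisson
    {R : Type*} [CommRing R] {P : Type*} [CommRing P] [Algebra R P]
    (br : P →ₗ[R] P →ₗ[R] P)
    (halt : ∀ x : P, br x x = 0)
    (hjac : ∀ x y z : P, br x (br y z) = br (br x y) z + br y (br x z))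
    (hleib : ∀ x y z : P, br x (y * z) = br x y * z + y * br x z)
    (β : P →ₗ[R] P)
    (hrb_mul : ∀ x y : P, β x * β y = β (β x * y + x * β y))
    (hrb_br : ∀ x y : P, br (β x) (β y) = β (br (β x) y + br x (β y)))
    (x y z : P) :
    br (β (br (β x) y)) z - br (β x) (br (β y) z)
      = br (β (br (β y) x)) z - br (β y) (br (β x) z) ∧
    β x * (β y * z) = β (β x * y) * z + β (β y * x) * z ∧
    β (br (β x) y - br (β y) x) * z
      = br (β x) (β y * z) - β y * br (β x) z ∧
    br (β (β x * y + β y * x)) z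
      = β x * br (β y) z + β y * br (β x) z := by
  have hskew : ∀ a b : P, br a b = - br b a := by
    intro a b
    have h := halt (a + b)
    simp only [map_add, LinearMap.add_apply, halt] at h
    linear_combination h
  have h1 : br (β x) (β y) = β (br (β x) y) - β (br (β y) x) := by
    rw [hrb_br, hskew x (β y), map_add, map_neg, sub_eq_add_neg]
  have h2 : β x * β y = β (β x * y) + β (β y * x) := by
    rw [hrb_mul, mul_comm x (β y), map_add]
  refine ⟨?_, ?_, ?_, ?_⟩
  · have h := hjac (β x) (β y) z
    rw [h1, map_sub, LinearMap.sub_apply] at h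
    linear_combination -h
  · linear_combination z * h2
  · rw [map_sub, hleib]
    linear_combination -z * h1
  · rw [map_add, ← h2, hskew, hleib, hskew z (β x), hskew z (β y)]
    ring
end
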